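/- There exists an absolute constant C > 0 such that for every ν ∈ (0,1] and every C² function h : ℝ → ℝ that is 2π-periodic, sup_{x ∈ ℝ} |h'(x)| ≤ C max{ 1, ν^{−1/6} E(h)^{1/3} }, where E(h) = ∫_{−π}^{π} ( (ν/2) h''(x)² + ¼ (h'(x)² − 1)² ) dx. -/

import Mathlib

open Real MeasureTheory Set

noncomputable section

/-- The 1D slope-selection energy `E(h) = ∫_{−π}^{π} ((ν/2)h''² + ¼(h'²−1)²) dx`. -/
noncomputable def energy1D (ν : ℝ) (h : ℝ → ℝ) : ℝ :=
  ∫ x in Icc (-Real.pi) Real.pi,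
    ((ν / 2) * (deriv (deriv h) x) ^ 2 + (1 / 4) * ((deriv h x) ^ 2 - 1) ^ 2)

/-!
The Modica–Mortola trick: by Young's inequality the energy density dominates a multiple of
`√ν |h'² - 1| |h''|`, the absolute value of the derivative of `√ν (h'³/3 - h')`. Periodicity makes
`h'` vanish somewhere, so `√ν |h'³/3 - h'|` is everywhere bounded by a multiple of the energy, and
where `|h'|` is large the cubic term dominates, giving `√ν |h'|³ ≲ E(h)`.
-/

theorem norm_sub_le_setIntegral_norm_of_hasDerivAt {E : Type*} [NormedAddCommGroup E]
    [NormedSpace ℝ E] [CompleteSpace E] {f f' : ℝ → E} {s : Set ℝ} [hs : OrdConnected s]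
    (hf : ∀ t ∈ s, HasDerivAt f (f' t) t) (hf' : IntegrableOn f' s)
    {x y : ℝ} (hx : x ∈ s) (hy : y ∈ s) :
    ‖f x - f y‖ ≤ ∫ t in s, ‖f' t‖ := by
  have hsub : uIcc y x ⊆ s := hs.uIcc_subset hy hx
  have ftc : ∫ t in y..x, f' t = f x - f y :=
    intervalIntegral.integral_eq_sub_of_hasDerivAt (fun t ht ↦ hf t (hsub ht))
      (hf'.mono_set hsub).intervalIntegrable
  calc ‖f x - f y‖ ≤ ∫ t in uIoc y x, ‖f' t‖ :=
        ftc ▸ intervalIntegral.norm_integral_le_integral_norm_uIoc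
    _ ≤ ∫ t in s, ‖f' t‖ :=
        setIntegral_mono_set hf'.norm (ae_of_all _ fun _ ↦ norm_nonneg _)
          (uIoc_subset_uIcc.trans hsub).eventuallyLE

theorem sqrt_mul_abs_mul_le {ν : ℝ} (hν : 0 ≤ ν) (a b : ℝ) :
    √ν * |a * b| ≤ ν / 2 * b ^ 2 + 1 / 2 * a ^ 2 := by
  have young := two_mul_le_add_sq (√ν * |b|) |a|
  rw [mul_pow, sq_sqrt hν, sq_abs, sq_abs] at young
  rw [abs_mul]
  linarith

theorem sqrt_mul_abs_sub_le_setIntegral {ν : ℝ} (hν : 0 ≤ ν) {Φ φ u u' : ℝ → ℝ} {s : Set ℝ}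
    [OrdConnected s] (hΦ : ∀ r, HasDerivAt Φ (φ r) r) (hu : ∀ t ∈ s, HasDerivAt u (u' t) t)
    (hφu : MemLp (fun t ↦ φ (u t)) 2 (volume.restrict s)) (hu' : MemLp u' 2 (volume.restrict s))
    {x y : ℝ} (hx : x ∈ s) (hy : y ∈ s) :
    √ν * |Φ (u x) - Φ (u y)| ≤ ∫ t in s, (ν / 2 * u' t ^ 2 + 1 / 2 * φ (u t) ^ 2) := by
  have hint : IntegrableOn (fun t ↦ φ (u t) * u' t) s := hφu.integrable_mul hu'
  calc √ν * |Φ (u x) - Φ (u y)| ≤ √ν * ∫ t in s, |φ (u t) * u' t| := by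
        gcongr
        exact norm_sub_le_setIntegral_norm_of_hasDerivAt (f := Φ ∘ u)
          (fun t ht ↦ (hΦ (u t)).comp t (hu t ht)) hint hx hy
    _ = ∫ t in s, √ν * |φ (u t) * u' t| := (integral_const_mul _ _).symm
    _ ≤ ∫ t in s, (ν / 2 * u' t ^ 2 + 1 / 2 * φ (u t) ^ 2) :=
        setIntegral_mono (hint.abs.const_mul _)
          ((hu'.integrable_sq.const_mul _).fun_add (hφu.integrable_sq.const_mul _))
          fun t ↦ sqrt_mul_abs_mul_le hν (φ (u t)) (u' t)

theorem hasDerivAt_cube_div_three_sub (r : ℝ) :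
    HasDerivAt (fun r : ℝ ↦ r ^ 3 / 3 - r) (r ^ 2 - 1) r :=
  (((hasDerivAt_pow 3 r).div_const 3).sub (hasDerivAt_id r)).congr_deriv (by norm_num)

theorem two_mul_abs_pow_three_le {r : ℝ} (hr : 3 ≤ |r|) : 2 * |r| ^ 3 ≤ 9 * |r ^ 3 / 3 - r| := by
  have triangle : |r| ^ 3 / 3 - |r| ≤ |r ^ 3 / 3 - r| := by
    calc |r| ^ 3 / 3 - |r| = |r ^ 3 / 3| - |r| := by rw [abs_div, abs_pow, Nat.abs_ofNat]
      _ ≤ |r ^ 3 / 3 - r| := abs_sub_abs_le_abs_sub _ _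
  have cubic_dominates : 9 * |r| ≤ |r| ^ 3 := by
    calc 9 * |r| = 3 ^ 2 * |r| := by norm_num
      _ ≤ |r| ^ 2 * |r| := by gcongr
      _ = |r| ^ 3 := by ring
  linarith

theorem rpow_neg_sixth_mul_rpow_third_pow_three {a b : ℝ} (ha : 0 ≤ a) (hb : 0 ≤ b) :
    (a ^ (-(1 : ℝ) / 6) * b ^ ((1 : ℝ) / 3)) ^ 3 = b / √a := by
  rw [mul_pow, ← rpow_mul_natCast ha, ← rpow_mul_natCast hb, div_eq_inv_mul b, sqrt_eq_rpow,
    ← rpow_neg ha]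
  norm_num

theorem periodic_deriv {𝕜 F : Type*} [NontriviallyNormedField 𝕜] [NormedAddCommGroup F]
    [NormedSpace 𝕜 F] {f : 𝕜 → F} {c : 𝕜} (hf : Function.Periodic f c) :
    Function.Periodic (deriv f) c := fun t ↦ by
  rw [← deriv_comp_add_const, hf.funext]

section Energy

variable {ν : ℝ} {h : ℝ → ℝ}

theorem energy1D_nonneg (hν : 0 ≤ ν) (h : ℝ → ℝ) : 0 ≤ energy1D ν h :=
  integral_nonneg fun _ ↦ by positivity

theorem sqrt_mul_abs_cube_sub_le_energy1D (hν : 0 ≤ ν) (hh : ContDiff ℝ 2 h) {x y : ℝ}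
    (hx : x ∈ Icc (-π) π) (hy : y ∈ Icc (-π) π) (hy₀ : deriv h y = 0) :
    √(2 * ν) * |deriv h x ^ 3 / 3 - deriv h x| ≤ 2 * energy1D ν h := by
  have hcont : Continuous (deriv h) := hh.continuous_deriv one_le_two
  have hcont' : Continuous (deriv (deriv h)) := hh.deriv'.continuous_deriv_one
  have hmemLp {g : ℝ → ℝ} (hg : Continuous g) : MemLp g 2 (volume.restrict (Icc (-π) π)) :=
    (memLp_two_iff_integrable_sq hg.aestronglyMeasurable).2 (hg.pow 2).integrableOn_Icc
  have modica_mortola := sqrt_mul_abs_sub_le_setIntegral (ν := 2 * ν) (by positivity)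
    hasDerivAt_cube_div_three_sub (fun t _ ↦ (hh.differentiable_deriv_two t).hasDerivAt)
    (hmemLp (by fun_prop)) (hmemLp hcont') hx hy
  calc √(2 * ν) * |deriv h x ^ 3 / 3 - deriv h x|
      ≤ ∫ t in Icc (-π) π,
          (2 * ν / 2 * deriv (deriv h) t ^ 2 + 1 / 2 * (deriv h t ^ 2 - 1) ^ 2) := by
        simpa [hy₀] using modica_mortola
    _ = 2 * energy1D ν h := by
        rw [energy1D, ← integral_const_mul]
        congr with t
        ring

theorem abs_deriv_le_max_energy1D_of_mem_Icc (hν : 0 < ν) (hh : ContDiff ℝ 2 h)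
    (hends : h (-π) = h π) {x : ℝ} (hx : x ∈ Icc (-π) π) :
    |deriv h x| ≤ 3 * max 1 (ν ^ (-(1 : ℝ) / 6) * energy1D ν h ^ ((1 : ℝ) / 3)) := by
  have hE := energy1D_nonneg hν.le h
  obtain ⟨y, hy, hy₀⟩ :=
    exists_deriv_eq_zero (by linarith [pi_pos]) hh.continuous.continuousOn hends
  rw [mul_max_of_nonneg _ _ zero_le_three, mul_one, le_max_iff]
  refine (le_total |deriv h x| 3).imp_right fun hlarge ↦ ?_
  have energy_bound : √ν * |deriv h x ^ 3 / 3 - deriv h x| ≤ 2 * energy1D ν h := by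
    refine le_trans ?_ (sqrt_mul_abs_cube_sub_le_energy1D hν.le hh hx (Ioo_subset_Icc_self hy) hy₀)
    gcongr
    linarith
  have cube_bound : √ν * |deriv h x| ^ 3 ≤ 9 * energy1D ν h := by
    have := mul_le_mul_of_nonneg_left (two_mul_abs_pow_three_le hlarge) (sqrt_nonneg ν)
    linarith
  refine le_of_pow_le_pow_left₀ three_ne_zero (by positivity) ?_
  rw [mul_pow, rpow_neg_sixth_mul_rpow_third_pow_three hν.le hE, ← mul_div_assoc,
    le_div_iff₀ (sqrt_pos.2 hν)]
  linarith

theorem stmt15_general (hν : 0 < ν) (hh : ContDiff ℝ 2 h) (hper : Function.Periodic h (2 * π))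
    (x : ℝ) :
    |deriv h x| ≤ 3 * max 1 (ν ^ (-(1 : ℝ) / 6) * energy1D ν h ^ ((1 : ℝ) / 3)) := by
  obtain ⟨z, hz, hxz⟩ := (periodic_deriv hper).exists_mem_Ico two_pi_pos x (-π)
  rw [show -π + 2 * π = π by ring] at hz
  have hends : h (-π) = h π := by
    rw [← hper (-π)]
    ring_nf
  exact hxz ▸ abs_deriv_le_max_energy1D_of_mem_Icc hν hh hends (Ico_subset_Icc_self hz)

end Energy

/-- Proposition 5.1, Eq. (5.1): there is an absolute constant `C > 0`
such that every `2π`-periodic `C²` function `h` satisfies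
`‖h'‖_∞ ≤ C max{1, ν^{−1/6} E(h)^{1/3}}` for every `ν ∈ (0,1]`. -/
theorem stmt15 :
    ∃ C : ℝ, 0 < C ∧ ∀ ν : ℝ, ν ∈ Ioc (0 : ℝ) 1 → ∀ h : ℝ → ℝ,
      ContDiff ℝ 2 h → Function.Periodic h (2 * Real.pi) →
      ∀ x : ℝ, |deriv h x| ≤
        C * max 1 (ν ^ (-(1 : ℝ) / 6) * energy1D ν h ^ ((1 : ℝ) / 3)) := by
  exact ⟨3, zero_lt_three, fun _ hν _ hh hper ↦ stmt15_general hν.1 hh hper⟩
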